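/- Let A be an n×n real matrix and B ∈ ℝ^n such that the pair (−Aᵀ, Bᵀ) is completely observable. Then there exist constants C₀ > 0 and c₁ > 0, depending only on A and B, such that: for every positive integer T and every absolutely continuous p : [0,T] → ℝ^n satisfying ṗ(t) = −Aᵀ p(t) + f(t) for almost every t, with |f(t)| ≤ 1/C₀ almost everywhere and |p(t)| ≥ 1 for all t ∈ [0,T], one has T ≤ c₁ ∫₀^T |⟨p(t), B⟩| dt. -/

import Mathlib

open MeasureTheory Matrix
open scoped RealInnerProductSpace

/-!
Write the system as `p' = M p + f`, observed through `C p`. Complete observability says that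
`∫ t in 0..1, ‖C (exp (t • M) x)‖` vanishes only at `x = 0`; being continuous and homogeneous in
`x`, it is at least `γ * ‖x‖` for some `γ > 0`, by compactness of the unit sphere. On each unit
interval `[k, k + 1]` a trajectory with forcing of size `ε` stays, by Grönwall, within
`ε * exp ‖M‖` of the free trajectory through `p k`, so its observation there is at least
`γ * ‖p k‖ - ‖C‖ * ε * exp ‖M‖`. For `ε` small this is at least `γ / 2`, and one sums over `k`.
-/

section ObservedLinearSystem

open Set
open NormedSpace (exp)
open scoped Interval NNReal

section HomogeneousFunction

variable {E : Type*} [NormedAddCommGroup E] [NormedSpace ℝ E] [ProperSpace E]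

lemma exists_pos_mul_norm_le_of_homogeneous {g : E → ℝ} (hg : Continuous g)
    (hsmul : ∀ (c : ℝ) (v : E), g (c • v) = |c| * g v) (hpos : ∀ v, v ≠ 0 → 0 < g v) :
    ∃ γ > 0, ∀ v, γ * ‖v‖ ≤ g v := by
  have hzero : g 0 = 0 := by simpa using hsmul 0 0
  rcases subsingleton_or_nontrivial E with _ | _
  · exact ⟨1, one_pos, fun v => by simp [Subsingleton.elim v 0, hzero]⟩
  obtain ⟨v₀, hv₀, hmin⟩ := (isCompact_sphere (0 : E) 1).exists_isMinOn
    (NormedSpace.sphere_nonempty.2 zero_le_one) hg.continuousOn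
  refine ⟨g v₀, hpos v₀ (ne_zero_of_mem_unit_sphere ⟨v₀, hv₀⟩), fun v => ?_⟩
  rcases eq_or_ne v 0 with rfl | hv
  · simp [hzero]
  have hnorm : 0 < ‖v‖ := norm_pos_iff.2 hv
  have hle : g v₀ ≤ g (‖v‖⁻¹ • v) := hmin (by simp [norm_smul, hnorm.ne'])
  rwa [hsmul, abs_of_pos (inv_pos.2 hnorm), le_inv_mul_iff₀' hnorm] at hle

end HomogeneousFunction

section ForcedSolution

variable {E : Type*} [NormedAddCommGroup E] [NormedSpace ℝ E]
  {v : E → E} {f p q : ℝ → E} {a b c d δ : ℝ} {K : ℝ≥0}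

lemma norm_intervalIntegral_le_of_ae_restrict_Icc
    (h : ∀ᵐ t ∂volume.restrict (Icc a b), ‖f t‖ ≤ δ) (hδ : 0 ≤ δ) {t : ℝ}
    (ht : t ∈ Icc a b) : ‖∫ s in a..t, f s‖ ≤ δ * (b - a) := by
  rw [ae_restrict_iff' measurableSet_Icc] at h
  have hbound : ∀ᵐ s, s ∈ Ι a t → ‖f s‖ ≤ δ := by
    filter_upwards [h] with s hs hst
    rw [uIoc_of_le ht.1] at hst
    exact hs ⟨hst.1.le, hst.2.trans ht.2⟩
  calc ‖∫ s in a..t, f s‖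
      ≤ δ * |t - a| := intervalIntegral.norm_integral_le_of_norm_le_const_ae hbound
    _ ≤ δ * (b - a) := by
      rw [abs_of_nonneg (sub_nonneg.2 ht.1)]
      gcongr
      exact ht.2

/-- `p` is a Carathéodory (absolutely continuous) solution on `[a, b]` of `p' = v p + f` with
integrable forcing `f`. The differential equation is encoded in its integrated form, so that no
almost-everywhere derivative of `p` is needed. -/
structure IsForcedSolutionOn (v : E → E) (f p : ℝ → E) (a b : ℝ) : Prop where
  continuousOn : ContinuousOn p (Icc a b)
  integrableOn : IntegrableOn f (Icc a b)
  eq_add_integral : ∀ t ∈ Icc a b, p t = p a + ∫ s in a..t, (v (p s) + f s)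

namespace IsForcedSolutionOn

lemma intervalIntegrable_drift (h : IsForcedSolutionOn v f p a b) (hv : Continuous v)
    (hc : c ∈ Icc a b) (hd : d ∈ Icc a b) :
    IntervalIntegrable (fun s => v (p s)) volume c d :=
  ((hv.comp_continuousOn h.continuousOn).mono (uIcc_subset_Icc hc hd)).intervalIntegrable

lemma intervalIntegrable_forcing (h : IsForcedSolutionOn v f p a b)
    (hc : c ∈ Icc a b) (hd : d ∈ Icc a b) : IntervalIntegrable f volume c d :=
  (h.integrableOn.mono_set (uIcc_subset_Icc hc hd)).intervalIntegrable

lemma mono (h : IsForcedSolutionOn v f p a b) (hv : Continuous v) (hac : a ≤ c) (hdb : d ≤ b) :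
    IsForcedSolutionOn v f p c d where
  continuousOn := h.continuousOn.mono (Icc_subset_Icc hac hdb)
  integrableOn := h.integrableOn.mono_set (Icc_subset_Icc hac hdb)
  eq_add_integral t ht := by
    have ht' : t ∈ Icc a b := Icc_subset_Icc hac hdb ht
    have hc' : c ∈ Icc a b := ⟨hac, ht.1.trans ht'.2⟩
    have ha' : a ∈ Icc a b := ⟨le_rfl, hac.trans hc'.2⟩
    have hint {x y : ℝ} (hx : x ∈ Icc a b) (hy : y ∈ Icc a b) :=
      (h.intervalIntegrable_drift hv hx hy).add (h.intervalIntegrable_forcing hx hy)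
    rw [h.eq_add_integral t ht', h.eq_add_integral c hc', add_assoc,
      intervalIntegral.integral_add_adjacent_intervals (hint ha' hc') (hint hc' ht')]

lemma hasDerivWithinAt_sub_integral_forcing [CompleteSpace E] (h : IsForcedSolutionOn v f p a b)
    (hv : Continuous v) {t : ℝ} (ht : t ∈ Icc a b) :
    HasDerivWithinAt (fun u => p u - ∫ s in a..u, f s) (v (p t)) (Icc a b) t := by
  have ha : a ∈ Icc a b := ⟨le_rfl, ht.1.trans ht.2⟩
  have hdrift : ContinuousOn (fun s => v (p s)) (Icc a b) := hv.comp_continuousOn h.continuousOn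
  have hsplit : ∀ u ∈ Icc a b, p u - ∫ s in a..u, f s = p a + ∫ s in a..u, v (p s) := by
    intro u hu
    rw [h.eq_add_integral u hu, intervalIntegral.integral_add
      (h.intervalIntegrable_drift hv ha hu) (h.intervalIntegrable_forcing ha hu)]
    abel
  have : Fact (t ∈ Icc a b) := ⟨ht⟩
  exact ((intervalIntegral.integral_hasDerivWithinAt_right (h.intervalIntegrable_drift hv ha ht)
    (hdrift.stronglyMeasurableAtFilter_nhdsWithin measurableSet_Icc t)
    (hdrift t ht)).const_add (p a)).congr hsplit (hsplit t ht)

end IsForcedSolutionOn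

lemma gronwallBound_zero_mul_self (K δ x : ℝ) :
    gronwallBound 0 K (K * δ) x = δ * (Real.exp (K * x) - 1) := by
  rcases eq_or_ne K 0 with rfl | hK
  · simp [gronwallBound_K0]
  · simp [gronwallBound_of_K_ne_0 hK, hK]

lemma IsForcedSolutionOn.dist_le [CompleteSpace E] (h : IsForcedSolutionOn v f p a b)
    (hv : LipschitzWith K v) (hf : ∀ t ∈ Icc a b, ‖∫ s in a..t, f s‖ ≤ δ)
    (hq : ContinuousOn q (Icc a b)) (hq' : ∀ t ∈ Ico a b, HasDerivWithinAt q (v (q t)) (Ici t) t)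
    (hpq : p a = q a) {t : ℝ} (ht : t ∈ Icc a b) :
    dist (p t) (q t) ≤ δ * Real.exp (K * (t - a)) := by
  -- Subtracting the primitive of `f` leaves a `C¹` curve, to which Grönwall applies.
  set F : ℝ → E := fun t => ∫ s in a..t, f s
  have hderiv : ∀ t ∈ Icc a b, HasDerivWithinAt (p - F) (v (p t)) (Icc a b) t :=
    fun t ht => h.hasDerivWithinAt_sub_integral_forcing hv.continuous ht
  have hdist (x y : E) : dist x (x - y) = ‖y‖ := by simp
  have happrox : ∀ t ∈ Ico a b, dist (v (p t)) (v ((p - F) t)) ≤ K * δ := fun t ht =>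
    calc dist (v (p t)) (v ((p - F) t)) ≤ K * dist (p t) (p t - F t) := hv.dist_le_mul _ _
      _ ≤ K * δ := by
        rw [hdist]
        gcongr
        exact hf t (Ico_subset_Icc_self ht)
  have hgronwall : dist ((p - F) t) (q t) ≤ gronwallBound 0 K (K * δ + 0) (t - a) :=
    dist_le_of_approx_trajectories_ODE (v := fun _ => v) (fun _ => hv)
      (fun s hs => (hderiv s hs).continuousWithinAt)
      (fun s hs => (hderiv s (Ico_subset_Icc_self hs)).mono_of_mem_nhdsWithin
        (Icc_mem_nhdsGE_of_mem hs))
      happrox hq hq' (fun s _ => (dist_self _).le) (by simp [F, hpq]) t ht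
  rw [add_zero, gronwallBound_zero_mul_self] at hgronwall
  calc dist (p t) (q t) ≤ dist (p t) ((p - F) t) + dist ((p - F) t) (q t) := dist_triangle _ _ _
    _ ≤ δ + δ * (Real.exp (K * (t - a)) - 1) :=
      add_le_add ((hdist _ _).trans_le (hf t ht)) hgronwall
    _ = δ * Real.exp (K * (t - a)) := by ring

end ForcedSolution

section Observation

variable {E F : Type*} [NormedAddCommGroup E] [NormedSpace ℝ E]
  [NormedAddCommGroup F] [NormedSpace ℝ F] {M : E →L[ℝ] E} {C : E →L[ℝ] F}

/-- Complete observability of the pair `(M, C)`. All powers of `M` are allowed, so that no dimension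
enters; when `E` has dimension `n`, the powers below `n` suffice by Cayley–Hamilton. -/
def IsCompletelyObservable (M : E →L[ℝ] E) (C : E →L[ℝ] F) : Prop :=
  ∀ x, (∀ k, C ((M ^ k) x) = 0) → x = 0

variable [CompleteSpace E]

lemma hasDerivAt_exp_smul_apply (M : E →L[ℝ] E) (x : E) (t : ℝ) :
    HasDerivAt (fun u : ℝ => exp (u • M) x) (exp (t • M) (M x)) t := by
  simpa using (hasDerivAt_exp_smul_const (𝕂 := ℝ) M t).clm_apply (hasDerivAt_const t x)

lemma hasDerivAt_exp_smul_apply' (M : E →L[ℝ] E) (x : E) (t : ℝ) :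
    HasDerivAt (fun u : ℝ => exp (u • M) x) (M (exp (t • M) x)) t := by
  simpa using (hasDerivAt_exp_smul_const' (𝕂 := ℝ) M t).clm_apply (hasDerivAt_const t x)

lemma continuous_exp_smul_apply (M : E →L[ℝ] E) :
    Continuous fun z : E × ℝ => exp (z.2 • M) z.1 := by
  have hexp : Continuous fun t : ℝ => exp (t • M) := continuous_iff_continuousAt.2 fun t =>
    (hasDerivAt_exp_smul_const (𝕂 := ℝ) M t).continuousAt
  exact (hexp.comp continuous_snd).clm_apply continuous_fst

lemma eqOn_zero_exp_smul_pow {s : Set ℝ} (hs : UniqueDiffOn ℝ s) {x : E}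
    (h : EqOn (fun t : ℝ => C (exp (t • M) x)) 0 s) (k : ℕ) :
    EqOn (fun t : ℝ => C (exp (t • M) ((M ^ k) x))) 0 s := by
  induction k with
  | zero => simpa using h
  | succ k ih =>
    intro t ht
    have hderiv := C.hasFDerivAt.comp_hasDerivAt t (hasDerivAt_exp_smul_apply M ((M ^ k) x) t)
    have hzero := (hasDerivWithinAt_const t s (0 : F)).congr ih (ih ht)
    simpa [pow_succ'] using (hs t ht).eq_deriv _ hderiv.hasDerivWithinAt hzero

lemma IsCompletelyObservable.integral_norm_pos (hobs : IsCompletelyObservable M C) {τ : ℝ}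
    (hτ : 0 < τ) {x : E} (hx : x ≠ 0) : 0 < ∫ t in (0 : ℝ)..τ, ‖C (exp (t • M) x)‖ := by
  have hcont : Continuous fun t : ℝ => ‖C (exp (t • M) x)‖ :=
    (C.continuous.comp ((continuous_exp_smul_apply M).comp (.prodMk_right x))).norm
  refine intervalIntegral.integral_pos hτ hcont.continuousOn (fun _ _ => norm_nonneg _) ?_
  by_contra! hle
  refine hx (hobs x fun k => ?_)
  simpa using eqOn_zero_exp_smul_pow (uniqueDiffOn_Icc hτ)
    (fun t ht => norm_le_zero_iff.1 (hle t ht)) k (left_mem_Icc.2 hτ.le)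

lemma IsForcedSolutionOn.dist_exp_smul_apply_le {f p : ℝ → E} {a b δ : ℝ}
    (h : IsForcedSolutionOn M f p a b) (hf : ∀ t ∈ Icc a b, ‖∫ s in a..t, f s‖ ≤ δ) {t : ℝ}
    (ht : t ∈ Icc a b) :
    dist (p t) (exp ((t - a) • M) (p a)) ≤ δ * Real.exp (‖M‖ * (t - a)) := by
  have hfree : ∀ s, HasDerivAt (fun u => exp ((u - a) • M) (p a))
      (M (exp ((s - a) • M) (p a))) s :=
    fun s => (hasDerivAt_exp_smul_apply' M (p a) (s - a)).comp_sub_const s a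
  exact h.dist_le M.lipschitz hf (fun s _ => (hfree s).continuousAt.continuousWithinAt)
    (fun s _ => (hfree s).hasDerivWithinAt) (by simp) ht

lemma IsForcedSolutionOn.integral_norm_ge {f p : ℝ → E} {a τ δ γ : ℝ}
    (h : IsForcedSolutionOn M f p a (a + τ)) (hτ : 0 ≤ τ)
    (hf : ∀ t ∈ Icc a (a + τ), ‖∫ s in a..t, f s‖ ≤ δ)
    (hγ : ∀ x : E, γ * ‖x‖ ≤ ∫ t in (0 : ℝ)..τ, ‖C (exp (t • M) x)‖) :
    γ * ‖p a‖ - τ * (‖C‖ * (δ * Real.exp (‖M‖ * τ))) ≤ ∫ t in a..a + τ, ‖C (p t)‖ := by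
  have ha : a ≤ a + τ := le_add_of_nonneg_right hτ
  set q : ℝ → E := fun t => exp ((t - a) • M) (p a)
  have hq : Continuous q :=
    (continuous_exp_smul_apply M).comp (continuous_const.prodMk (continuous_sub_right a))
  have hδ : 0 ≤ δ := (norm_nonneg _).trans (hf a (left_mem_Icc.2 ha))
  have hdist : ∀ t ∈ Icc a (a + τ), dist (p t) (q t) ≤ δ * Real.exp (‖M‖ * τ) := fun t ht =>
    calc dist (p t) (q t) ≤ δ * Real.exp (‖M‖ * (t - a)) := h.dist_exp_smul_apply_le hf ht
      _ ≤ δ * Real.exp (‖M‖ * τ) := by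
        gcongr
        linarith [ht.2]
  have hpoint : ∀ t ∈ Icc a (a + τ),
      ‖C (q t)‖ ≤ ‖C (p t)‖ + ‖C‖ * (δ * Real.exp (‖M‖ * τ)) := fun t ht =>
    calc ‖C (q t)‖ ≤ ‖C (p t)‖ + ‖C (p t) - C (q t)‖ := norm_le_norm_add_norm_sub _ _
      _ ≤ ‖C (p t)‖ + ‖C‖ * (δ * Real.exp (‖M‖ * τ)) := by
        rw [← map_sub]
        gcongr
        exact C.le_opNorm_of_le (dist_eq_norm (p t) (q t) ▸ hdist t ht)
  have hCp : IntervalIntegrable (fun t => ‖C (p t)‖) volume a (a + τ) :=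
    ((C.continuous.comp_continuousOn h.continuousOn).norm).intervalIntegrable_of_Icc ha
  have hCq : IntervalIntegrable (fun t => ‖C (q t)‖) volume a (a + τ) :=
    (C.continuous.comp hq).norm.intervalIntegrable _ _
  rw [sub_le_iff_le_add]
  calc γ * ‖p a‖ ≤ ∫ t in (0 : ℝ)..τ, ‖C (exp (t • M) (p a))‖ := hγ (p a)
    _ = ∫ t in a..a + τ, ‖C (q t)‖ := by
      simp [q, intervalIntegral.integral_comp_sub_right (fun t => ‖C (exp (t • M) (p a))‖)]
    _ ≤ ∫ t in a..a + τ, (‖C (p t)‖ + ‖C‖ * (δ * Real.exp (‖M‖ * τ))) :=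
      intervalIntegral.integral_mono_on ha hCq (hCp.add intervalIntegrable_const) hpoint
    _ = (∫ t in a..a + τ, ‖C (p t)‖) + τ * (‖C‖ * (δ * Real.exp (‖M‖ * τ))) := by
      rw [intervalIntegral.integral_add hCp intervalIntegrable_const,
        intervalIntegral.integral_const, add_sub_cancel_left, smul_eq_mul]

lemma IsForcedSolutionOn.sum_norm_sub_le_integral_norm {T : ℕ} {f p : ℝ → E} {ε γ : ℝ}
    (h : IsForcedSolutionOn M f p 0 T) (hε : 0 ≤ ε)
    (hf : ∀ᵐ t ∂volume.restrict (Icc (0 : ℝ) T), ‖f t‖ ≤ ε)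
    (hγ : ∀ x : E, γ * ‖x‖ ≤ ∫ t in (0 : ℝ)..1, ‖C (exp (t • M) x)‖) :
    ∑ k ∈ Finset.range T, (γ * ‖p k‖ - ‖C‖ * Real.exp ‖M‖ * ε)
      ≤ ∫ t in Icc (0 : ℝ) T, ‖C (p t)‖ := by
  have hle {k : ℕ} (hk : k < T) : (k : ℝ) + 1 ≤ T := mod_cast hk
  have hsub {k : ℕ} (hk : k < T) : IsForcedSolutionOn M f p k (k + 1) :=
    h.mono M.continuous k.cast_nonneg (hle hk)
  have hunit : ∀ k ∈ Finset.range T,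
      γ * ‖p k‖ - ‖C‖ * Real.exp ‖M‖ * ε ≤ ∫ t in (k : ℝ)..(k + 1 : ℕ), ‖C (p t)‖ := by
    intro k hk
    rw [Finset.mem_range] at hk
    have hfk : ∀ᵐ t ∂volume.restrict (Icc (k : ℝ) (k + 1)), ‖f t‖ ≤ ε :=
      ae_restrict_of_ae_restrict_of_subset (Icc_subset_Icc k.cast_nonneg (hle hk)) hf
    calc γ * ‖p k‖ - ‖C‖ * Real.exp ‖M‖ * ε
        = γ * ‖p k‖ - 1 * (‖C‖ * (ε * (k + 1 - k) * Real.exp (‖M‖ * 1))) := by ring_nf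
      _ ≤ ∫ t in (k : ℝ)..k + 1, ‖C (p t)‖ := (hsub hk).integral_norm_ge zero_le_one
        (fun t ht => norm_intervalIntegral_le_of_ae_restrict_Icc hfk hε ht) hγ
      _ = ∫ t in (k : ℝ)..(k + 1 : ℕ), ‖C (p t)‖ := by rw [Nat.cast_succ]
  have hint : ∀ k < T, IntervalIntegrable (fun t => ‖C (p t)‖) volume k (k + 1 : ℕ) := fun k hk =>
    (C.continuous.comp_continuousOn (by simpa using (hsub hk).continuousOn)).norm
      |>.intervalIntegrable_of_Icc (by simp)
  calc ∑ k ∈ Finset.range T, (γ * ‖p k‖ - ‖C‖ * Real.exp ‖M‖ * ε)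
      ≤ ∑ k ∈ Finset.range T, ∫ t in (k : ℝ)..(k + 1 : ℕ), ‖C (p t)‖ := Finset.sum_le_sum hunit
    _ = ∫ t in Icc (0 : ℝ) T, ‖C (p t)‖ := by
      rw [intervalIntegral.sum_integral_adjacent_intervals hint, Nat.cast_zero,
        integral_Icc_eq_integral_Ioc, intervalIntegral.integral_of_le T.cast_nonneg]

end Observation

section FiniteDimensional

variable {E F : Type*} [NormedAddCommGroup E] [NormedSpace ℝ E] [FiniteDimensional ℝ E]
  [NormedAddCommGroup F] [NormedSpace ℝ F] {M : E →L[ℝ] E} {C : E →L[ℝ] F}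

lemma IsCompletelyObservable.exists_pos_mul_norm_le_integral (hobs : IsCompletelyObservable M C)
    {τ : ℝ} (hτ : 0 < τ) :
    ∃ γ > 0, ∀ x, γ * ‖x‖ ≤ ∫ t in (0 : ℝ)..τ, ‖C (exp (t • M) x)‖ := by
  have : CompleteSpace E := FiniteDimensional.complete ℝ E
  have : ProperSpace E := FiniteDimensional.proper ℝ E
  have hcont : Continuous fun z : E × ℝ => ‖C (exp (z.2 • M) z.1)‖ :=
    (C.continuous.comp (continuous_exp_smul_apply M)).norm
  exact exists_pos_mul_norm_le_of_homogeneous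
    (intervalIntegral.continuous_parametric_intervalIntegral_of_continuous' hcont 0 τ)
    (fun c x => by simp [norm_smul]) (fun x hx => hobs.integral_norm_pos hτ hx)

theorem adjoint_observation_lower_bound_general (hobs : IsCompletelyObservable M C) :
    ∃ C₀ > (0 : ℝ), ∃ c₁ > (0 : ℝ), ∀ (T : ℕ) (p f : ℝ → E), IsForcedSolutionOn M f p 0 T →
      (∀ᵐ t ∂volume.restrict (Icc (0 : ℝ) T), ‖f t‖ ≤ 1 / C₀) →
      (∀ t ∈ Icc (0 : ℝ) T, 1 ≤ ‖p t‖) →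
      (T : ℝ) ≤ c₁ * ∫ t in Icc (0 : ℝ) T, ‖C (p t)‖ := by
  have : CompleteSpace E := FiniteDimensional.complete ℝ E
  obtain ⟨γ, hγ_pos, hγ⟩ := hobs.exists_pos_mul_norm_le_integral one_pos
  obtain ⟨ε, hε_pos, hε⟩ := exists_pos_mul_lt (half_pos hγ_pos) (‖C‖ * Real.exp ‖M‖)
  refine ⟨1 / ε, by positivity, 2 / γ, by positivity, fun T p f h hf hp => ?_⟩
  rw [one_div_one_div] at hf
  have hunit : ∀ k ∈ Finset.range T, γ / 2 ≤ γ * ‖p k‖ - ‖C‖ * Real.exp ‖M‖ * ε := by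
    intro k hk
    have hpk : 1 ≤ ‖p k‖ := hp k ⟨k.cast_nonneg, mod_cast (Finset.mem_range.1 hk).le⟩
    linarith [le_mul_of_one_le_right hγ_pos.le hpk]
  calc (T : ℝ) = 2 / γ * ∑ k ∈ Finset.range T, γ / 2 := by
        simp only [Finset.sum_const, Finset.card_range, nsmul_eq_mul]
        field_simp
    _ ≤ 2 / γ * ∫ t in Icc (0 : ℝ) T, ‖C (p t)‖ := by
        gcongr
        exact (Finset.sum_le_sum hunit).trans (h.sum_norm_sub_le_integral_norm hε_pos.le hf hγ)

end FiniteDimensional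

section EuclideanSpace

variable {n : ℕ} {A : Matrix (Fin n) (Fin n) ℝ} {B : EuclideanSpace ℝ (Fin n)}

lemma isCompletelyObservable_toEuclideanCLM
    (hobs : ∀ v : EuclideanSpace ℝ (Fin n),
      (∀ k < n, ⟪B, Matrix.toEuclideanLin (A ^ k) v⟫ = 0) → v = 0) :
    IsCompletelyObservable (Matrix.toEuclideanCLM (𝕜 := ℝ) A) (innerSL ℝ B) :=
  fun v hv => hobs v fun k _ => by
    rw [← Matrix.coe_toEuclideanCLM_eq_toEuclideanLin, map_pow]
    exact hv k

end EuclideanSpace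

end ObservedLinearSystem

/-- **Lower bound for the observation of the perturbed adjoint system.**
If the pair `(−Aᵀ, Bᵀ)` is completely observable, there are constants `C₀ > 0`
and `c₁ > 0`, depending only on `A` and `B`, such that for every positive integer
`T` and every absolutely continuous `p : [0,T] → ℝⁿ` with `ṗ = −Aᵀ p + f` a.e.,
`‖f‖ ≤ 1/C₀` a.e. and `‖p(t)‖ ≥ 1` on `[0,T]`, one has
`T ≤ c₁ ∫₀ᵀ |⟪p(t), B⟫| dt`. -/
theorem adjoint_observation_lower_bound
    (n : ℕ) (A : Matrix (Fin n) (Fin n) ℝ) (B : EuclideanSpace ℝ (Fin n))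
    (hobs : ∀ v : EuclideanSpace ℝ (Fin n),
      (∀ k < n, ⟪B, Matrix.toEuclideanLin ((-Aᵀ) ^ k) v⟫ = 0) → v = 0) :
    ∃ C₀ > (0:ℝ), ∃ c₁ > (0:ℝ), ∀ (T : ℕ), 0 < T →
      ∀ (p f : ℝ → EuclideanSpace ℝ (Fin n)),
        ContinuousOn p (Set.Icc 0 (T : ℝ)) →
        IntegrableOn f (Set.Icc 0 (T : ℝ)) →
        (∀ t ∈ Set.Icc (0:ℝ) (T : ℝ),
          p t = p 0 + ∫ s in (0:ℝ)..t, (- Matrix.toEuclideanLin Aᵀ (p s) + f s)) →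
        (∀ᵐ t ∂(volume.restrict (Set.Icc (0:ℝ) (T : ℝ))), ‖f t‖ ≤ 1 / C₀) →
        (∀ t ∈ Set.Icc (0:ℝ) (T : ℝ), 1 ≤ ‖p t‖) →
        (T : ℝ) ≤ c₁ * ∫ t in Set.Icc (0:ℝ) (T : ℝ), |⟪p t, B⟫| := by
  obtain ⟨C₀, hC₀, c₁, hc₁, hbound⟩ :=
    adjoint_observation_lower_bound_general (isCompletelyObservable_toEuclideanCLM hobs)
  refine ⟨C₀, hC₀, c₁, hc₁, fun T _ p f hp hf hpf hfC hp_ge => ?_⟩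
  have hsol : IsForcedSolutionOn (Matrix.toEuclideanCLM (𝕜 := ℝ) (-Aᵀ)) f p 0 T :=
    ⟨hp, hf, by simpa [← Matrix.coe_toEuclideanCLM_eq_toEuclideanLin] using hpf⟩
  simpa [real_inner_comm] using hbound T p f hsol hfC hp_ge
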